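/- Suppose each weight vector w_t (t = 1,…,T) is a standard basis vector in ℝ^{d_w}. Let y_0 ∈ {0,1} be fixed and let y, ỹ ∈ {0,1}^T (with ỹ_0 := y_0) satisfy Σ_{t=1}^T w_t y_t = Σ_{t=1}^T w_t ỹ_t and Σ_{t=1}^T w_t y_{t−1} = Σ_{t=1}^T w_t ỹ_{t−1}. Then for every A ∈ ℝ^{d_w}, P_{γ,A}(y) / P_{γ,A}(ỹ) = exp( γ Σ_{t=1}^T ( y_t y_{t−1} − ỹ_t ỹ_{t−1} ) ); in particular this ratio does not depend on A. -/

import Mathlib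

/-- The lagged outcome `y_{t-1}` (with fixed initial value `y₀` at `t = 1`),
0-indexed in `t`. -/
def ylag {T : ℕ} (y0 : ℝ) (y : Fin T → ℝ) (t : Fin T) : ℝ :=
  if t.val = 0 then y0
  else y ⟨t.val - 1, lt_of_le_of_lt (Nat.sub_le _ _) t.isLt⟩

/-- The AR(1) logit probability of `y ∈ {0,1}^T` given `A`:
`P_{γ,A}(y) = ∏_t exp(y_t (γ y_{t-1} + w_tᵀA)) / (1 + exp(γ y_{t-1} + w_tᵀA))`. -/
noncomputable def ar1P {T dw : ℕ} (γ : ℝ) (y0 : ℝ)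
    (w : Fin T → Fin dw → ℝ) (A : Fin dw → ℝ) (y : Fin T → ℝ) : ℝ :=
  ∏ t, Real.exp (y t * (γ * ylag y0 y t + ∑ k, w t k * A k)) /
      (1 + Real.exp (γ * ylag y0 y t + ∑ k, w t k * A k))

lemma ylag_eq_zero_or_one {T : ℕ} {y0 : ℝ} (hy0 : y0 = 0 ∨ y0 = 1) {y : Fin T → ℝ}
    (hy : ∀ t, y t = 0 ∨ y t = 1) (t : Fin T) : ylag y0 y t = 0 ∨ ylag y0 y t = 1 := by
  unfold ylag
  split_ifs
  exacts [hy0, hy _]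

/-- Equality of the weighted sums `∑ t, w t * u t` is preserved by pairing the weights
with any vector. -/
lemma sum_pairing_mul_congr {ι κ : Type*} [Fintype ι] [Fintype κ] {w : ι → κ → ℝ}
    {u v : ι → ℝ} (h : ∀ k, ∑ t, w t k * u t = ∑ t, w t k * v t) (g : κ → ℝ) :
    ∑ t, (∑ k, w t k * g k) * u t = ∑ t, (∑ k, w t k * g k) * v t := by
  have key (x : ι → ℝ) :
      ∑ t, (∑ k, w t k * g k) * x t = ∑ k, g k * ∑ t, w t k * x t := by
    simp_rw [Finset.sum_mul, Finset.mul_sum]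
    rw [Finset.sum_comm]
    exact Finset.sum_congr rfl fun _ _ => Finset.sum_congr rfl fun _ _ => by ring
  simp_rw [key, h]

/-- For basis-vector weights and binary outcomes, the log-probability is affine in the
lagged outcomes, with slope the pairing of `w t` with a vector depending only on `γ` and `A`. -/
lemma ar1P_eq_exp {T dw : ℕ} (γ : ℝ) {w : Fin T → Fin dw → ℝ}
    (hw : ∀ t, ∃ j : Fin dw, w t = Pi.single j 1) {y0 : ℝ} (hy0 : y0 = 0 ∨ y0 = 1)
    {y : Fin T → ℝ} (hy : ∀ t, y t = 0 ∨ y t = 1) (A : Fin dw → ℝ) :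
    ar1P γ y0 w A y =
      Real.exp (γ * ∑ t, y t * ylag y0 y t + ∑ t, (∑ k, w t k * A k) * y t
        - ∑ t, Real.log (1 + Real.exp (∑ k, w t k * A k))
        - ∑ t, (∑ k, w t k * (Real.log (1 + Real.exp (γ + A k))
            - Real.log (1 + Real.exp (A k)))) * ylag y0 y t) := by
  rw [Finset.mul_sum, ← Finset.sum_add_distrib, ← Finset.sum_sub_distrib,
    ← Finset.sum_sub_distrib, Real.exp_sum, ar1P]
  refine Finset.prod_congr rfl fun t _ => ?_
  obtain ⟨j, hj⟩ := hw t
  have pairing (g : Fin dw → ℝ) : ∑ k, w t k * g k = g j := by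
    simp [hj, Pi.single_apply]
  rw [pairing, pairing]
  have hpos (x : ℝ) : 0 < 1 + Real.exp x := by positivity
  rw [← Real.exp_log (hpos (γ * ylag y0 y t + A j)), ← Real.exp_sub]
  congr 1
  rcases ylag_eq_zero_or_one hy0 hy t with h | h <;> simp only [h, mul_zero, mul_one, zero_add] <;>
    ring

/-- Suppose each weight vector `w_t` is a standard basis vector of
`ℝ^{d_w}`. If the binary sequences `y, y'` (with the same fixed initial value `y₀`)
satisfy `Σ_t w_t y_t = Σ_t w_t y'_t` and `Σ_t w_t y_{t-1} = Σ_t w_t y'_{t-1}`, then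
for every `A`, `P_{γ,A}(y)/P_{γ,A}(y') = exp(γ Σ_t (y_t y_{t-1} - y'_t y'_{t-1}))`;
in particular the ratio does not depend on `A`. -/
theorem stmt6 {T dw : ℕ} (hT : 1 ≤ T) (hdw : 1 ≤ dw) (γ : ℝ)
    (w : Fin T → Fin dw → ℝ)
    (hw : ∀ t, ∃ j : Fin dw, w t = Pi.single j 1)
    (y0 : ℝ) (hy0 : y0 = 0 ∨ y0 = 1)
    (y y' : Fin T → ℝ)
    (hy : ∀ t, y t = 0 ∨ y t = 1) (hy' : ∀ t, y' t = 0 ∨ y' t = 1)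
    (h1 : ∀ k, ∑ t, w t k * y t = ∑ t, w t k * y' t)
    (h2 : ∀ k, ∑ t, w t k * ylag y0 y t = ∑ t, w t k * ylag y0 y' t) :
    ∀ A : Fin dw → ℝ,
      ar1P γ y0 w A y / ar1P γ y0 w A y' =
        Real.exp (γ * ∑ t, (y t * ylag y0 y t - y' t * ylag y0 y' t)) := by
  intro A
  rw [ar1P_eq_exp γ hw hy0 hy A, ar1P_eq_exp γ hw hy0 hy' A, ← Real.exp_sub,
    sum_pairing_mul_congr h1, sum_pairing_mul_congr h2, Finset.sum_sub_distrib]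
  ring_nf
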